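/- Let G = (V, E) be a strongly connected digraph with start vertex s, and let v, w ∈ V be distinct. Then v and w are 2-edge-connected in G if and only if there is a root r (r = s or r marked) such that v and w are both ordinary vertices of the auxiliary graph G_r (i.e., v, w ∈ T(r)) and v and w are 2-edge-connected in G_r. -/

import Mathlib

variable {V : Type*}

/-- `p` is a path from `u` to `w` in the digraph with edge set `E`:
a nonempty list of vertices starting at `u`, ending at `w`, with consecutive edges in `E`. -/
def IsPathFrom (E : Set (V × V)) (u w : V) (p : List V) : Prop :=
  p.head? = some u ∧ p.getLast? = some w ∧ p.Chain' (fun a b => (a, b) ∈ E)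

/-- There is a path from `u` to `w` in the digraph with edge set `E`. -/
def Reaches (E : Set (V × V)) (u w : V) : Prop :=
  ∃ p, IsPathFrom E u w p

/-- Every vertex has a path to every other vertex. -/
def StronglyConnected (E : Set (V × V)) : Prop :=
  ∀ u w : V, Reaches E u w

/-- `v` and `w` are 2-edge-connected: `v = w` or, for every edge `e`,
there are paths from `v` to `w` and from `w` to `v` avoiding `e`. -/
def TwoEdgeConn (E : Set (V × V)) (v w : V) : Prop :=
  v = w ∨ ∀ e ∈ E, Reaches (E \ {e}) v w ∧ Reaches (E \ {e}) w v

/-- `w` is 2-edge-connected from `v`: for every edge `e` there is a path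
from `v` to `w` avoiding `e`. -/
def TwoEdgeConnFrom (E : Set (V × V)) (v w : V) : Prop :=
  ∀ e ∈ E, Reaches (E \ {e}) v w

/-- `u` dominates `w` in the flow graph with start vertex `s`:
every path from `s` to `w` contains `u`. -/
def Dominates (E : Set (V × V)) (s u w : V) : Prop :=
  ∀ p, IsPathFrom E s w p → u ∈ p

/-- `(u, w)` is a bridge of the flow graph with start vertex `s`:
every path from `s` to `w` contains the edge `(u, w)`. -/
def IsBridge (E : Set (V × V)) (s u w : V) : Prop :=
  (u, w) ∈ E ∧ ∀ p, IsPathFrom E s w p → (u, w) ∈ p.zip p.tail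

/-- `w` is marked in the flow graph with start vertex `s`: some bridge ends at `w`. -/
def Marked (E : Set (V × V)) (s w : V) : Prop :=
  ∃ u, IsBridge E s u w

/-- The reverse digraph: every edge direction is reversed. -/
def reverseE (E : Set (V × V)) : Set (V × V) :=
  {e | (e.2, e.1) ∈ E}

/-- `u` and `w` are mutually reachable. -/
def MutualReach (E : Set (V × V)) (u w : V) : Prop :=
  Reaches E u w ∧ Reaches E w u

/-- The number of strongly connected components: the number of equivalence
classes of the mutual-reachability relation. -/
noncomputable def numSCC (E : Set (V × V)) : ℕ :=
  Nat.card (Quot (MutualReach E))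

/-- `e` is a strong bridge: removing it increases the number of strongly
connected components. -/
def IsStrongBridge (E : Set (V × V)) (e : V × V) : Prop :=
  e ∈ E ∧ numSCC E < numSCC (E \ {e})

/-- `d` is the immediate dominator of `w` in the flow graph with start vertex `s`:
`d` is a proper dominator of `w` dominated by every proper dominator of `w`. -/
def ImmDomIs (E : Set (V × V)) (s w d : V) : Prop :=
  Dominates E s d w ∧ d ≠ w ∧ ∀ x, Dominates E s x w → x ≠ w → Dominates E s x d

/-- `r` is the deepest marked dominator `r_v` of `v`: either `r` is a marked
dominator of `v` dominated by every marked dominator of `v`, or no marked vertex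
dominates `v` and `r = s`. -/
def DeepestMarkedDomIs (E : Set (V × V)) (s v r : V) : Prop :=
  (Marked E s r ∧ Dominates E s r v ∧
    ∀ x, Marked E s x → Dominates E s x v → Dominates E s x r)
  ∨ (r = s ∧ ∀ x, Marked E s x → ¬ Dominates E s x v)

/-- `T(r)`: the vertices whose deepest marked dominator is `r`. -/
def Tset (E : Set (V × V)) (s r : V) : Set V :=
  {v | DeepestMarkedDomIs E s v r}

/-- The roots of the decomposition of the dominator tree: `s` and the marked vertices. -/
def IsRoot (E : Set (V × V)) (s r : V) : Prop :=
  r = s ∨ Marked E s r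

/-- `z` is a marked child (in the dominator tree) of a boundary vertex of `T(r)`. -/
def MarkedChildOfBoundary (E : Set (V × V)) (s r z : V) : Prop :=
  Marked E s z ∧ ∃ x ∈ Tset E s r, ImmDomIs E s z x

/-- The vertex set `V_r` of the auxiliary graph `G_r` (with `dr` playing the role
of `d(r)` when `r ≠ s`): the ordinary vertices `T(r)`, the marked children of
boundary vertices of `T(r)`, and (if `r ≠ s`) the vertex `d(r)`. -/
def auxVerts (E : Set (V × V)) (s r dr : V) : Set V :=
  Tset E s r ∪ {z | MarkedChildOfBoundary E s r z} ∪ {x | r ≠ s ∧ x = dr}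

/-- The edge set `E_r` of the auxiliary graph `G_r` (with `dr` playing the role of
`d(r)` when `r ≠ s`): edges of `G` between ordinary vertices; the edge `(v, w)` for
each boundary vertex `v ∈ T(r)` and marked child `w` of `v`; the edge `(d(r), r)` if
`r ≠ s`; and the shortcut edges of types (a), (b), (c). -/
def auxEdges (E : Set (V × V)) (s r dr : V) : Set (V × V) :=
  {e | e ∈ E ∧ e.1 ∈ Tset E s r ∧ e.2 ∈ Tset E s r} ∪
  {e | e.1 ∈ Tset E s r ∧ Marked E s e.2 ∧ ImmDomIs E s e.2 e.1} ∪
  {e | r ≠ s ∧ e = (dr, r)} ∪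
  {e | ∃ u v, (u, v) ∈ E ∧ u ∈ Tset E s r ∧ ¬ Dominates E s r v ∧ e = (u, dr)} ∪
  {e | ∃ u v z, (u, v) ∈ E ∧ v ∈ Tset E s r ∧ Dominates E s r u ∧ u ∉ Tset E s r ∧
      MarkedChildOfBoundary E s r z ∧ Dominates E s z u ∧ e = (z, v)} ∪
  {e | ∃ u v z, (u, v) ∈ E ∧ Dominates E s r u ∧ u ∉ Tset E s r ∧ ¬ Dominates E s r v ∧
      MarkedChildOfBoundary E s r z ∧ Dominates E s z u ∧ e = (z, dr)}

open Relation

theorem rtg_mono {R S : V → V → Prop} {a b : V} (h : ReflTransGen R a b)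
    (hRS : ∀ x y, R x y → S x y) : ReflTransGen S a b := by
  induction h with
  | refl => exact .refl
  | tail _ e ih => exact ih.tail (hRS _ _ e)

theorem reaches_iff {E : Set (V × V)} {u w : V} :
    Reaches E u w ↔ ReflTransGen (fun a b => (a, b) ∈ E) u w := by
  constructor
  · rintro ⟨p, h1, h2, h3⟩
    induction p generalizing u with
    | nil => simp at h1
    | cons a l ih =>
      simp only [List.head?_cons, Option.some.injEq] at h1
      subst h1
      cases l with
      | nil =>
        simp at h2
        subst h2
        exact .refl
      | cons b l =>
        have h3' := List.isChain_cons_cons.1 h3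
        exact .head h3'.1 (ih rfl (by simpa using h2) h3'.2)
  · intro h
    induction h using ReflTransGen.head_induction_on with
    | refl => exact ⟨[w], rfl, rfl, List.isChain_singleton _⟩
    | head hab hbc ih =>
      rename_i a b
      obtain ⟨p, h1, h2, h3⟩ := ih
      cases p with
      | nil => simp at h1
      | cons c l =>
        simp only [List.head?_cons, Option.some.injEq] at h1
        subst h1
        exact ⟨a :: c :: l, rfl, by simpa using h2, List.isChain_cons_cons.2 ⟨hab, h3⟩⟩

/-- reachable from `s` avoiding `u` -/
def RA (E : Set (V × V)) (s u x : V) : Prop :=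
  s ≠ u ∧ ReflTransGen (fun a b => (a, b) ∈ E ∧ b ≠ u) s x

theorem not_dom_iff {E : Set (V × V)} {s u x : V} :
    ¬ Dominates E s u x ↔ RA E s u x := by
  unfold Dominates
  push Not
  constructor
  · rintro ⟨p, ⟨h1, h2, h3⟩, h4⟩
    have hs : s ≠ u := by
      rintro rfl
      exact h4 (List.mem_of_mem_head? (by rw [h1]; rfl))
    refine ⟨hs, ?_⟩
    clear hs
    revert h4
    induction p generalizing s with
    | nil => simp at h1
    | cons a l ih =>
      intro h4
      simp only [List.head?_cons, Option.some.injEq] at h1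
      subst h1
      cases l with
      | nil =>
        simp at h2
        subst h2
        exact .refl
      | cons b l =>
        have h3' := List.isChain_cons_cons.1 h3
        refine .head ⟨h3'.1, ?_⟩ (ih rfl (by simpa using h2) h3'.2 ?_)
        · rintro rfl; simp at h4
        · intro h; exact h4 (List.mem_cons_of_mem _ h)
  · rintro ⟨hs, h⟩
    revert hs
    induction h using ReflTransGen.head_induction_on with
    | refl => 
      intro hs
      exact ⟨[x], ⟨rfl, rfl, List.isChain_singleton _⟩, by simpa using hs.symm⟩
    | head hab hbc ih =>
      rename_i a b
      intro hs
      obtain ⟨p, ⟨h1, h2, h3⟩, h4⟩ := ih hab.2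
      cases p with
      | nil => simp at h1
      | cons c l =>
        simp only [List.head?_cons, Option.some.injEq] at h1
        subst h1
        refine ⟨a :: c :: l, ⟨rfl, by simpa using h2, List.isChain_cons_cons.2 ⟨hab.1, h3⟩⟩, ?_⟩
        intro h
        rcases List.mem_cons.1 h with h | h
        · exact hs h.symm
        · exact h4 h

theorem chain_zip {R : V → V → Prop} {p : List V} (h : p.IsChain R) {a b : V}
    (hab : (a, b) ∈ p.zip p.tail) : R a b := by
  induction p with
  | nil => simp at hab
  | cons c l ih =>
    cases l with
    | nil => simp at hab
    | cons d l =>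
      have h' := List.isChain_cons_cons.1 h
      simp only [List.tail_cons, List.zip_cons_cons, List.mem_cons, Prod.mk.injEq] at hab
      rcases hab with ⟨rfl, rfl⟩ | hab
      · exact h'.1
      · exact ih h'.2 (by simpa using hab)

theorem bridge_not {E : Set (V × V)} {s u z : V} (h : IsBridge E s u z) :
    ¬ ReflTransGen (fun a b => (a, b) ∈ E \ {(u, z)}) s z := by
  intro hr
  obtain ⟨p, h1, h2, h3⟩ := reaches_iff.2 hr
  have h3' : p.IsChain (fun a b => (a, b) ∈ E) := List.IsChain.imp (fun _ _ h => h.1) h3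
  have := h.2 p ⟨h1, h2, h3'⟩
  exact (chain_zip h3 this).2 rfl

section dom
variable {E : Set (V × V)} {s : V}

theorem dom_refl (a : V) : Dominates E s a a := by
  by_contra h
  obtain ⟨h1, h2⟩ := not_dom_iff.1 h
  rcases ReflTransGen.cases_tail h2 with h | ⟨c, _, _, h⟩
  · exact h1 h.symm
  · exact h rfl

theorem dom_start (a : V) : Dominates E s s a := by
  by_contra h
  exact (not_dom_iff.1 h).1 rfl

theorem not_dom_start {a : V} (h : s ≠ a) : ¬ Dominates E s a s :=
  not_dom_iff.2 ⟨h, .refl⟩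

theorem not_dom_step {u x y : V} (h : ¬ Dominates E s u x) (e : (x, y) ∈ E) (hy : y ≠ u) :
    ¬ Dominates E s u y := by
  rw [not_dom_iff] at *
  exact ⟨h.1, h.2.tail ⟨e, hy⟩⟩

/-- induction principle on avoiding reachability -/
theorem not_dom_ind {u x : V} (h : ¬ Dominates E s u x) (P : V → Prop) (h0 : P s)
    (hs : ∀ x y, ¬ Dominates E s u x → ¬ Dominates E s u y → P x → (x, y) ∈ E → P y) : P x := by
  obtain ⟨h1, h2⟩ := not_dom_iff.1 h
  clear h
  induction h2 with
  | refl => exact h0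
  | tail hab e ih => 
    exact hs _ _ (not_dom_iff.2 ⟨h1, hab⟩) (not_dom_iff.2 ⟨h1, hab.tail e⟩) ih e.1

theorem reach_ind (hsc : StronglyConnected E) (P : V → Prop) (h0 : P s)
    (hs : ∀ x y, P x → (x, y) ∈ E → P y) (x : V) : P x := by
  have := reaches_iff.1 (hsc s x)
  induction this with
  | refl => exact h0
  | tail _ e ih => exact hs _ _ ih e

theorem dom_trans {a b c : V} (h1 : Dominates E s a b) (h2 : Dominates E s b c) :
    Dominates E s a c := by
  by_contra h
  have hsa := (not_dom_iff.1 h).1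
  refine not_dom_ind h (fun x => ¬ Dominates E s b x) ?_ ?_ h2
  · apply not_dom_start
    rintro rfl
    exact not_dom_start hsa h1
  · intro x y _ hy hx e
    refine not_dom_step hx e ?_
    rintro rfl
    exact hy h1

theorem dom_antisymm (hsc : StronglyConnected E) {a b : V} (h1 : Dominates E s a b)
    (h2 : Dominates E s b a) : a = b := by
  by_contra hab
  have := reach_ind (s := s) hsc (fun x => ¬ Dominates E s a x ∧ ¬ Dominates E s b x) ?_ ?_ a
  · exact this.1 (dom_refl a)
  · constructor
    · apply not_dom_start
      rintro rfl
      exact not_dom_start hab h2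
    · apply not_dom_start
      rintro rfl
      exact not_dom_start (Ne.symm hab) h1
  · rintro x y ⟨hx1, hx2⟩ e
    constructor
    · apply not_dom_step hx1 e
      rintro rfl
      exact not_dom_step hx2 e hab h2
    · apply not_dom_step hx2 e
      rintro rfl
      exact not_dom_step hx1 e (Ne.symm hab) h1

theorem dom_chain (hsc : StronglyConnected E) {a b c : V} (h1 : Dominates E s a c)
    (h2 : Dominates E s b c) : Dominates E s a b ∨ Dominates E s b a := by
  by_contra hcon
  push Not at hcon
  obtain ⟨hab, hba⟩ := hcon
  have hne : a ≠ b := by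
    rintro rfl
    exact hab (dom_refl a)
  have := reach_ind (s := s) hsc (fun x => ¬ Dominates E s a x ∨ ¬ Dominates E s b x) ?_ ?_ c
  · tauto
  · by_cases h : s = a
    · right
      exact not_dom_start (by rwa [h])
    · left
      exact not_dom_start h
  · rintro x y (hx | hx) e
    · by_cases h : y = a
      · subst h; exact Or.inr hba
      · exact Or.inl (not_dom_step hx e h)
    · by_cases h : y = b
      · subst h; exact Or.inl hab
      · exact Or.inr (not_dom_step hx e h)

theorem bridge_enter {u z x y : V} (h : IsBridge E s u z) (e : (x, y) ∈ E)
    (hx : ¬ Dominates E s z x) (hy : Dominates E s z y) : y = z ∧ x = u := by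
  have hyz : y = z := by
    by_contra hne
    exact not_dom_step hx e hne hy
  refine ⟨hyz, ?_⟩
  subst hyz
  by_contra hxu
  obtain ⟨_, h2⟩ := not_dom_iff.1 hx
  refine bridge_not h (ReflTransGen.tail (b := x) (rtg_mono h2 ?_) ⟨e, ?_⟩)
  · rintro a b ⟨h3, h4⟩
    refine ⟨h3, ?_⟩
    simp [h4]
  · simp [hxu]

theorem bridge_ne {u z : V} (h : IsBridge E s u z) : s ≠ z := by
  rintro rfl
  exact bridge_not h .refl

theorem bridge_src (hsc : StronglyConnected E) {u z : V} (h : IsBridge E s u z) :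
    ¬ Dominates E s z u := by
  intro hu
  refine reach_ind (s := s) hsc (fun x => ¬ Dominates E s z x) (not_dom_start (bridge_ne h)) ?_ z
    (dom_refl z)
  intro x y hx e hy
  obtain ⟨_, rfl⟩ := bridge_enter h e hx hy
  exact hx hu

theorem bridge_idom (hsc : StronglyConnected E) {u z d : V} (h : IsBridge E s u z)
    (hd : ImmDomIs E s z d) : d = u := by
  have huz : u ≠ z := by
    rintro rfl
    exact bridge_src hsc h (dom_refl _)
  have hdom : Dominates E s u z := by
    by_contra hc
    obtain ⟨hs, h2⟩ := not_dom_iff.1 hc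
    have : ∀ x, ReflTransGen (fun a b => (a, b) ∈ E ∧ b ≠ u) s x →
        x ≠ u ∧ ReflTransGen (fun a b => (a, b) ∈ E \ {(u, z)}) s x := by
      intro x hx
      induction hx with
      | refl => exact ⟨hs, .refl⟩
      | tail _ e ih =>
        refine ⟨e.2, ih.2.tail ⟨e.1, ?_⟩⟩
        simp [ih.1]
    exact bridge_not h (this z h2).2
  refine dom_antisymm hsc ?_ (hd.2.2 u hdom huz)
  by_contra hc
  exact not_dom_step hc h.1 hd.2.1.symm hd.1

theorem not_marked_start : ¬ Marked E s s := by
  rintro ⟨u, h⟩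
  exact bridge_ne h rfl

theorem noenter {u z x y : V} (h : IsBridge E s u z) (hx : ¬ Dominates E s z x)
    (hr : ReflTransGen (fun a b => (a, b) ∈ E \ {(u, z)}) x y) : ¬ Dominates E s z y := by
  induction hr with
  | refl => exact hx
  | tail _ e ih =>
    intro hc
    obtain ⟨rfl, rfl⟩ := bridge_enter h e.1 ih hc
    exact e.2 rfl

theorem inside (hsc : StronglyConnected E) {z u : V} (h : Dominates E s z u) :
    ReflTransGen (fun x y => (x, y) ∈ E ∧ Dominates E s z x ∧ Dominates E s z y) z u := by
  refine reach_ind (s := s) hsc (fun u => Dominates E s z u →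
    ReflTransGen (fun x y => (x, y) ∈ E ∧ Dominates E s z x ∧ Dominates E s z y) z u) ?_ ?_ u h
  · intro h
    by_cases hs : s = z
    · rw [hs]
    · exact absurd h (not_dom_start hs)
  · intro x y ih e hy
    by_cases hx : Dominates E s z x
    · exact (ih hx).tail ⟨e, hx, hy⟩
    · by_cases hyz : y = z
      · rw [hyz]
      · exact absurd hy (not_dom_step hx e hyz)

theorem outside (hsc : StronglyConnected E) {r d x : V} (hb : IsBridge E s d r)
    (h : ¬ Dominates E s r x) :
    ReflTransGen (fun x y => (x, y) ∈ E ∧ ¬ Dominates E s r y) x d := by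
  have := reaches_iff.1 (hsc x d)
  induction this using ReflTransGen.head_induction_on with
  | refl => exact .refl
  | head e hbc ih =>
    rename_i a b
    by_cases hb' : Dominates E s r b
    · obtain ⟨_, rfl⟩ := bridge_enter hb e h hb'
      exact .refl
    · exact .head ⟨e, hb'⟩ (ih hb')

theorem deepest_exists [Fintype V] (hsc : StronglyConnected E) (v : V) :
    ∃ r, IsRoot E s r ∧ v ∈ Tset E s r := by
  classical
  by_cases hne : ∃ x, Marked E s x ∧ Dominates E s x v
  · obtain ⟨m, hm, hmax⟩ := Finset.exists_max_image
      (Finset.univ.filter (fun x => Marked E s x ∧ Dominates E s x v))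
      (fun m => (Finset.univ.filter (fun y => Dominates E s y m)).card)
      (by obtain ⟨x, hx⟩ := hne; exact ⟨x, by simpa using hx⟩)
    simp only [Finset.mem_filter, Finset.mem_univ, true_and] at hm hmax
    refine ⟨m, Or.inr hm.1, Or.inl ⟨hm.1, hm.2, ?_⟩⟩
    intro x hx hxv
    rcases dom_chain hsc hxv hm.2 with h | h
    · exact h
    · have hsub : Finset.univ.filter (fun y => Dominates E s y m) ⊆
          Finset.univ.filter (fun y => Dominates E s y x) := by
        intro y hy
        simp only [Finset.mem_filter, Finset.mem_univ, true_and] at hy ⊢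
        exact dom_trans hy h
      have heq := Finset.eq_of_subset_of_card_le hsub (hmax x ⟨hx, hxv⟩)
      have : x ∈ Finset.univ.filter (fun y => Dominates E s y m) := by
        rw [heq]
        simpa using dom_refl x
      simpa using this
  · push Not at hne
    exact ⟨s, Or.inl rfl, Or.inr ⟨rfl, hne⟩⟩

theorem T_dom {r x : V} (h : x ∈ Tset E s r) : Dominates E s r x := by
  rcases h with h | ⟨rfl, _⟩
  · exact h.2.1
  · exact dom_start x

theorem T_marked {r x y : V} (h : x ∈ Tset E s r) (hy : Marked E s y) (hyx : Dominates E s y x) :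
    Dominates E s y r := by
  rcases h with h | ⟨rfl, h⟩
  · exact h.2.2 y hy hyx
  · exact absurd hyx (h y hy)

theorem root_T {r : V} (h : Marked E s r) : r ∈ Tset E s r :=
  Or.inl ⟨h, dom_refl r, fun _ _ h => h⟩

theorem mcb_dom {r z : V} (h : MarkedChildOfBoundary E s r z) : Dominates E s r z := by
  obtain ⟨_, x, hx, hz⟩ := h
  exact dom_trans (T_dom hx) hz.1

theorem mcb_not_r (hsc : StronglyConnected E) {r z : V} (h : MarkedChildOfBoundary E s r z) :
    ¬ Dominates E s z r := by
  intro hc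
  have := dom_antisymm hsc hc (mcb_dom h)
  obtain ⟨_, x, hx, hz⟩ := h
  subst this
  exact hz.2.1 (dom_antisymm hsc hz.1 (T_dom hx))

theorem mcb_not_T (hsc : StronglyConnected E) {r z x : V} (h : MarkedChildOfBoundary E s r z)
    (hx : x ∈ Tset E s r) : ¬ Dominates E s z x :=
  fun hc => mcb_not_r hsc h (T_marked hx h.1 hc)

theorem mcb_disj (hsc : StronglyConnected E) {r z z' x : V} (h : MarkedChildOfBoundary E s r z)
    (h' : MarkedChildOfBoundary E s r z') (hx : Dominates E s z x) (hx' : Dominates E s z' x) :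
    z = z' := by
  by_contra hne
  rcases dom_chain hsc hx hx' with hd | hd
  · obtain ⟨_, y, hy, hz⟩ := h'
    exact mcb_not_T hsc h hy (hz.2.2 z hd hne)
  · obtain ⟨_, y, hy, hz⟩ := h
    exact mcb_not_T hsc h' hy (hz.2.2 z' hd (Ne.symm hne))

/-- the deepest root of a vertex in `D(r) \ T(r)` is not a dominator of `r` -/
theorem deep_aux [Fintype V] (hsc : StronglyConnected E) {r y : V} (hr : IsRoot E s r)
    (hy : Dominates E s r y) (hyT : y ∉ Tset E s r) :
    ∃ q, Marked E s q ∧ Dominates E s q y ∧ ¬ Dominates E s q r := by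
  by_contra hc
  push Not at hc
  apply hyT
  rcases hr with rfl | hr
  · right
    refine ⟨rfl, fun x hx hxy => ?_⟩
    have := hc x hx hxy
    have h2 := dom_antisymm hsc this (dom_start x)
    subst h2
    exact not_marked_start hx
  · exact Or.inl ⟨hr, hy, hc⟩

theorem T_exit [Fintype V] (hsc : StronglyConnected E)
    (hdr : ∀ r, Marked E s r → ∃ d, ImmDomIs E s r d) {r u y : V} (hr : IsRoot E s r)
    (hu : u ∈ Tset E s r) (e : (u, y) ∈ E)
    (hy : Dominates E s r y) (hyT : y ∉ Tset E s r) :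
    Marked E s y ∧ ImmDomIs E s y u := by
  obtain ⟨q, hq, hqy, hqr⟩ := deep_aux hsc hr hy hyT
  have hqu : ¬ Dominates E s q u := fun h => hqr (T_marked hu hq h)
  obtain ⟨d, hd⟩ := hdr q hq
  obtain ⟨b, hb⟩ := id hq
  obtain ⟨rfl, rfl⟩ := bridge_enter hb e hqu hqy
  have := bridge_idom hsc hb hd
  subst this
  exact ⟨hq, hd⟩

theorem mcb_exit [Fintype V] (hsc : StronglyConnected E)
    (hdr : ∀ r, Marked E s r → ∃ d, ImmDomIs E s r d) {r z x y : V} (hr : IsRoot E s r)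
    (hz : MarkedChildOfBoundary E s r z) (hx : Dominates E s z x) (e : (x, y) ∈ E)
    (hy : Dominates E s r y) (hyT : y ∉ Tset E s r) :
    Dominates E s z y := by
  obtain ⟨q, hq, hqy, hqr⟩ := deep_aux hsc hr hy hyT
  by_cases hqx : Dominates E s q x
  · rcases dom_chain hsc hx hqx with h | h
    · exact dom_trans h hqy
    · by_cases hqz : q = z
      · subst hqz; exact hqy
      · obtain ⟨_, d, hd, hzd⟩ := hz
        exact absurd (T_marked hd hq (hzd.2.2 q h hqz)) hqr
  · obtain ⟨d, hd⟩ := hdr q hq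
    obtain ⟨b, hb⟩ := id hq
    obtain ⟨rfl, rfl⟩ := bridge_enter hb e hqx hqy
    have := bridge_idom hsc hb hd
    subst this
    exact dom_trans hx hd.1

theorem trichotomy [Fintype V] (hsc : StronglyConnected E)
    (hdr : ∀ r, Marked E s r → ∃ d, ImmDomIs E s r d) {r : V} (hr : IsRoot E s r) (x : V) :
    ¬ Dominates E s r x ∨ x ∈ Tset E s r ∨
      ∃ z, MarkedChildOfBoundary E s r z ∧ Dominates E s z x := by
  refine reach_ind (s := s) hsc (fun x => ¬ Dominates E s r x ∨ x ∈ Tset E s r ∨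
      ∃ z, MarkedChildOfBoundary E s r z ∧ Dominates E s z x) ?_ ?_ x
  · by_cases h : r = s
    · subst h
      right; left; right
      refine ⟨rfl, fun x hx hxs => ?_⟩
      have := dom_antisymm hsc hxs (dom_start x)
      subst this
      exact not_marked_start hx
    · left
      exact not_dom_start (Ne.symm h)
  · intro x y ih e
    by_cases hy : Dominates E s r y
    swap
    · exact Or.inl hy
    by_cases hyT : y ∈ Tset E s r
    · exact Or.inr (Or.inl hyT)
    right; right
    rcases ih with hx | hx | ⟨z, hz, hx⟩
    · exfalso
      rcases hr with rfl | hr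
      · exact hx (dom_start x)
      · obtain ⟨b, hb⟩ := id hr
        obtain ⟨rfl, _⟩ := bridge_enter hb e hx hy
        exact hyT (root_T hr)
    · have := T_exit hsc hdr hr hx e hy hyT
      exact ⟨y, ⟨this.1, x, hx, this.2⟩, dom_refl y⟩
    · exact ⟨z, hz, mcb_exit hsc hdr hr hz hx e hy hyT⟩

end dom

theorem rtg_between {R : V → V → Prop} {v w : V} (h : ReflTransGen R v w) :
    ReflTransGen (fun x y => R x y ∧ ReflTransGen R v x ∧ ReflTransGen R y w) v w := by
  induction h with
  | refl => exact .refl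
  | tail hvx e ih =>
    refine .tail (rtg_mono ih ?_) ⟨e, hvx, .refl⟩
    rintro a b ⟨h1, h2, h3⟩
    exact ⟨h1, h2, h3.tail e⟩

/-- contraction relation -/
def Sim (E : Set (V × V)) (s r d x x' : V) : Prop :=
  (x ∈ Tset E s r ∧ x' = x) ∨ (¬ Dominates E s r x ∧ x' = d) ∨
    (MarkedChildOfBoundary E s r x' ∧ Dominates E s x' x)

section main
variable {E : Set (V × V)} {s : V}

theorem sim_step [Fintype V] (hsc : StronglyConnected E) {dr : V → V}
    (hdr : ∀ r, Marked E s r → ImmDomIs E s r (dr r)) {r : V} (hr : IsRoot E s r)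
    {x y x' : V} (e : (x, y) ∈ E) (hx : Sim E s r (dr r) x x') :
    ∃ y', Sim E s r (dr r) y y' ∧ (x' = y' ∨ (x', y') ∈ auxEdges E s r (dr r)) := by
  have hdr' : ∀ r, Marked E s r → ∃ d, ImmDomIs E s r d := fun r h => ⟨_, hdr r h⟩
  by_cases hy : Dominates E s r y
  · by_cases hyT : y ∈ Tset E s r
    · refine ⟨y, Or.inl ⟨hyT, rfl⟩, ?_⟩
      rcases hx with ⟨hx, rfl⟩ | ⟨hx, rfl⟩ | ⟨hz, hx⟩
      · right
        exact Or.inl (Or.inl (Or.inl (Or.inl (Or.inl ⟨e, hx, hyT⟩))))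
      · right
        have hrs : r ≠ s := by
          rintro rfl
          exact hx (dom_start x)
        have hm : Marked E s r := hr.resolve_left hrs
        obtain ⟨b, hb⟩ := id hm
        obtain ⟨rfl, _⟩ := bridge_enter hb e hx hy
        exact Or.inl (Or.inl (Or.inl (Or.inr ⟨hrs, rfl⟩)))
      · right
        refine Or.inl (Or.inr ⟨x, y, x', e, hyT, dom_trans (mcb_dom hz) hx, ?_, hz, hx, rfl⟩)
        intro h
        exact mcb_not_T hsc hz h hx
    · rcases hx with ⟨hx, rfl⟩ | ⟨hx, rfl⟩ | ⟨hz, hx⟩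
      · have := T_exit hsc hdr' hr hx e hy hyT
        refine ⟨y, Or.inr (Or.inr ⟨⟨this.1, _, hx, this.2⟩, dom_refl y⟩), Or.inr ?_⟩
        exact Or.inl (Or.inl (Or.inl (Or.inl (Or.inr ⟨hx, this⟩))))
      · exfalso
        rcases hr with rfl | hr
        · exact hx (dom_start x)
        · obtain ⟨b, hb⟩ := id hr
          obtain ⟨rfl, _⟩ := bridge_enter hb e hx hy
          exact hyT (root_T hr)
      · exact ⟨x', Or.inr (Or.inr ⟨hz, mcb_exit hsc hdr' hr hz hx e hy hyT⟩), Or.inl rfl⟩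
  · refine ⟨dr r, Or.inr (Or.inl ⟨hy, rfl⟩), ?_⟩
    rcases hx with ⟨hx, rfl⟩ | ⟨hx, rfl⟩ | ⟨hz, hx⟩
    · right
      exact Or.inl (Or.inl (Or.inr ⟨_, y, e, hx, hy, rfl⟩))
    · exact Or.inl rfl
    · right
      refine Or.inr ⟨x, y, x', e, dom_trans (mcb_dom hz) hx, ?_, hy, hz, hx, rfl⟩
      intro h
      exact mcb_not_T hsc hz h hx

theorem sim_path [Fintype V] (hsc : StronglyConnected E) {dr : V → V}
    (hdr : ∀ r, Marked E s r → ImmDomIs E s r (dr r)) {r : V} (hr : IsRoot E s r)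
    (S : V → V → Prop) (hS : ∀ x y, S x y → (x, y) ∈ E) (e' : V × V)
    (hav : ∀ x y x' y', S x y → Sim E s r (dr r) x x' → Sim E s r (dr r) y y' → (x', y') ≠ e')
    {v w : V} (hv : v ∈ Tset E s r) (hw : w ∈ Tset E s r) (h : ReflTransGen S v w) :
    Reaches (auxEdges E s r (dr r) \ {e'}) v w := by
  rw [reaches_iff]
  have : ∃ w', Sim E s r (dr r) w w' ∧
      ReflTransGen (fun a b => (a, b) ∈ auxEdges E s r (dr r) \ {e'}) v w' := by
    clear hw
    induction h with
    | refl => exact ⟨v, Or.inl ⟨hv, rfl⟩, .refl⟩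
    | tail _ e ih =>
      obtain ⟨x', hx', hr'⟩ := ih
      obtain ⟨y', hy', h⟩ := sim_step hsc hdr hr (hS _ _ e) hx'
      refine ⟨y', hy', ?_⟩
      rcases h with rfl | h
      · exact hr'
      · exact hr'.tail ⟨h, hav _ _ _ _ e hx' hy'⟩
  clear h
  obtain ⟨w', hw', h⟩ := this
  rcases hw' with ⟨_, h1⟩ | ⟨h1, _⟩ | ⟨h1, h2⟩
  · rw [h1] at h
    exact h
  · exact absurd (T_dom hw) h1
  · exact absurd h2 (mcb_not_T hsc h1 hw)

theorem forward_dr [Fintype V] (hsc : StronglyConnected E) {dr : V → V}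
    (hdr : ∀ r, Marked E s r → ImmDomIs E s r (dr r)) {r : V} (hr : IsRoot E s r)
    (hrs : r ≠ s) {v w : V} (hv : v ∈ Tset E s r) (hw : w ∈ Tset E s r)
    (h : ∀ e ∈ E, Reaches (E \ {e}) v w) (e' : V × V) (he' : e'.1 = dr r ∨ e'.2 = dr r) :
    Reaches (auxEdges E s r (dr r) \ {e'}) v w := by
  have hm : Marked E s r := hr.resolve_left hrs
  obtain ⟨b, hb⟩ := id hm
  have hbd := bridge_idom hsc hb (hdr r hm)
  have hndr : ¬ Dominates E s r (dr r) := hbd ▸ bridge_src hsc hb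
  have h1 := rtg_between (reaches_iff.1 (h _ hb.1))
  refine sim_path hsc hdr hr (fun x y => (x, y) ∈ E ∧ Dominates E s r x ∧ Dominates E s r y)
    (fun _ _ h => h.1) e' ?_ hv hw (rtg_mono h1 ?_)
  · have key : ∀ x x', Dominates E s r x → Sim E s r (dr r) x x' → x' ≠ dr r := by
      rintro x x' hx hs rfl
      rcases hs with ⟨h1, h2⟩ | ⟨h1, _⟩ | ⟨h1, _⟩
      · rw [h2] at hndr; exact hndr hx
      · exact h1 hx
      · exact hndr (mcb_dom h1)
    rintro x y x' y' ⟨_, hx, hy⟩ hx' hy' rfl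
    rcases he' with h | h
    · exact key _ _ hx hx' h
    · exact key _ _ hy hy' h
  · rintro x y ⟨e, h2, h3⟩
    refine ⟨e.1, ?_, ?_⟩
    · by_contra hc
      exact noenter hb hc (h3.head e) (T_dom hw)
    · by_contra hc
      exact noenter hb hc h3 (T_dom hw)

theorem forward_z [Fintype V] (hsc : StronglyConnected E) {dr : V → V}
    (hdr : ∀ r, Marked E s r → ImmDomIs E s r (dr r)) {r : V} (hr : IsRoot E s r)
    {v w : V} (hv : v ∈ Tset E s r) (hw : w ∈ Tset E s r)
    (h : ∀ e ∈ E, Reaches (E \ {e}) v w) (e' : V × V) {z : V}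
    (hz : MarkedChildOfBoundary E s r z) (he' : e'.1 = z ∨ e'.2 = z) :
    Reaches (auxEdges E s r (dr r) \ {e'}) v w := by
  obtain ⟨b, hb⟩ := id hz.1
  have h1 := rtg_between (reaches_iff.1 (h _ hb.1))
  refine sim_path hsc hdr hr (fun x y => (x, y) ∈ E ∧ ¬ Dominates E s z x ∧ ¬ Dominates E s z y)
    (fun _ _ h => h.1) e' ?_ hv hw (rtg_mono h1 ?_)
  · have key : ∀ x x', ¬ Dominates E s z x → Sim E s r (dr r) x x' → x' ≠ z := by
      rintro x x' hx hs rfl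
      rcases hs with ⟨h1, h2⟩ | ⟨h1, h2⟩ | ⟨h1, h2⟩
      · subst h2; exact hx (dom_refl _)
      · have hrs : r ≠ s := by
          rintro rfl
          exact h1 (dom_start x)
        have hm : Marked E s r := hr.resolve_left hrs
        obtain ⟨b, hb⟩ := id hm
        have hbd := bridge_idom hsc hb (hdr r hm)
        have hndr : ¬ Dominates E s r (dr r) := hbd ▸ bridge_src hsc hb
        rw [← h2] at hndr
        exact hndr (mcb_dom hz)
      · exact hx h2
    rintro x y x' y' ⟨_, hx, hy⟩ hx' hy' rfl
    rcases he' with h | h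
    · exact key _ _ hx hx' h
    · exact key _ _ hy hy' h
  · rintro x y ⟨e, h2, h3⟩
    exact ⟨e.1, noenter hb (mcb_not_T hsc hz hv) h2, noenter hb (mcb_not_T hsc hz hv) (h2.tail e)⟩

theorem forward_T [Fintype V] (hsc : StronglyConnected E) {dr : V → V}
    (hdr : ∀ r, Marked E s r → ImmDomIs E s r (dr r)) {r : V} (hr : IsRoot E s r)
    {v w : V} (hv : v ∈ Tset E s r) (hw : w ∈ Tset E s r)
    (h : ∀ e ∈ E, Reaches (E \ {e}) v w) (e' : V × V) (he : e' ∈ E)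
    (h1 : e'.1 ∈ Tset E s r) (h2 : e'.2 ∈ Tset E s r) :
    Reaches (auxEdges E s r (dr r) \ {e'}) v w := by
  refine sim_path hsc hdr hr (fun x y => (x, y) ∈ E \ {e'}) (fun _ _ h => h.1) e' ?_ hv hw
    (reaches_iff.1 (h _ he))
  have key : ∀ x x', x' ∈ Tset E s r → Sim E s r (dr r) x x' → x' = x := by
    rintro x x' hx hs
    rcases hs with ⟨h1, h2⟩ | ⟨h1, h2⟩ | ⟨h1, h2⟩
    · exact h2
    · have hrs : r ≠ s := by
        rintro rfl
        exact h1 (dom_start x)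
      have hm : Marked E s r := hr.resolve_left hrs
      obtain ⟨b, hb⟩ := id hm
      have hbd := bridge_idom hsc hb (hdr r hm)
      have hndr : ¬ Dominates E s r (dr r) := hbd ▸ bridge_src hsc hb
      rw [← h2] at hndr
      exact absurd (T_dom hx) hndr
    · exact absurd (dom_refl x') (mcb_not_T hsc h1 hx)
  rintro x y x' y' ⟨_, hne⟩ hx' hy' rfl
  have e1 := key _ _ h1 hx'
  have e2 := key _ _ h2 hy'
  subst e1 e2
  exact hne rfl

theorem forward [Fintype V] (hsc : StronglyConnected E) {dr : V → V}
    (hdr : ∀ r, Marked E s r → ImmDomIs E s r (dr r)) {r : V} (hr : IsRoot E s r)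
    {v w : V} (hv : v ∈ Tset E s r) (hw : w ∈ Tset E s r)
    (h : ∀ e ∈ E, Reaches (E \ {e}) v w) (e' : V × V) (he : e' ∈ auxEdges E s r (dr r)) :
    Reaches (auxEdges E s r (dr r) \ {e'}) v w := by
  have hne : ∀ y, ¬ Dominates E s r y → r ≠ s := by
    rintro y hy rfl
    exact hy (dom_start y)
  rcases he with ((((he | he) | he) | he) | he) | he
  · exact forward_T hsc hdr hr hv hw h e' he.1 he.2.1 he.2.2
  · exact forward_z hsc hdr hr hv hw h e' (z := e'.2) ⟨he.2.1, _, he.1, he.2.2⟩ (Or.inr rfl)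
  · obtain ⟨hrs, rfl⟩ := he
    exact forward_dr hsc hdr hr hrs hv hw h _ (Or.inl rfl)
  · obtain ⟨a, b, _, _, hb, rfl⟩ := he
    exact forward_dr hsc hdr hr (hne b hb) hv hw h _ (Or.inr rfl)
  · obtain ⟨a, b, z, _, _, _, _, hz, _, rfl⟩ := he
    exact forward_z hsc hdr hr hv hw h _ hz (Or.inl rfl)
  · obtain ⟨a, b, z, _, _, _, hb, _, _, rfl⟩ := he
    exact forward_dr hsc hdr hr (hne b hb) hv hw h _ (Or.inr rfl)

theorem idom_edge (hsc : StronglyConnected E) {z d : V} (hz : Marked E s z)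
    (hd : ImmDomIs E s z d) : IsBridge E s d z := by
  obtain ⟨b, hb⟩ := id hz
  have := bridge_idom hsc hb hd
  subst this
  exact hb

theorem lift_edge (hsc : StronglyConnected E) {dr : V → V}
    (hdr : ∀ r, Marked E s r → ImmDomIs E s r (dr r)) {r : V} (hr : IsRoot E s r)
    {e : V × V} {a b : V} (hab : (a, b) ∈ auxEdges E s r (dr r)) (H1 : (a, b) ≠ e)
    (H2 : MarkedChildOfBoundary E s r a → ¬ Dominates E s a e.1 ∨ ¬ Dominates E s r e.2)
    (H3 : b = dr r → Dominates E s r e.2) :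
    ReflTransGen (fun x y => (x, y) ∈ E \ {e}) a b := by
  have hne : ∀ y, ¬ Dominates E s r y → Marked E s r := by
    rintro y hy
    apply hr.resolve_left
    rintro rfl
    exact hy (dom_start y)
  have hout : ∀ y, ¬ Dominates E s r y → Dominates E s r e.2 →
      ReflTransGen (fun x y => (x, y) ∈ E \ {e}) y (dr r) := by
    intro y hy he
    refine rtg_mono (outside hsc (idom_edge hsc (hne y hy) (hdr r (hne y hy))) hy) ?_
    rintro p q ⟨h1, h2⟩
    refine ⟨h1, ?_⟩
    rintro rfl
    exact h2 he
  have hin : ∀ z y, MarkedChildOfBoundary E s r z → Dominates E s z y →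
      (¬ Dominates E s z e.1 ∨ ¬ Dominates E s r e.2) →
      ReflTransGen (fun x y => (x, y) ∈ E \ {e}) z y := by
    intro z y hz hy he
    refine rtg_mono (inside hsc hy) ?_
    rintro p q ⟨h1, h2, h3⟩
    refine ⟨h1, ?_⟩
    rintro rfl
    rcases he with he | he
    · exact he h2
    · exact he (dom_trans (mcb_dom hz) h3)
  rcases hab with ((((h | h) | h) | h) | h) | h
  · exact .single ⟨h.1, H1⟩
  · exact .single ⟨(idom_edge hsc h.2.1 h.2.2).1, H1⟩
  · obtain ⟨hrs, h⟩ := h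
    have hm := hr.resolve_left hrs
    have h' := (idom_edge hsc hm (hdr r hm)).1
    rw [← h] at h'
    exact .single ⟨h', H1⟩
  · obtain ⟨u, y, h1, h2, h3, h4⟩ := h
    obtain ⟨rfl, rfl⟩ := Prod.mk.inj h4
    have he := H3 rfl
    refine .head ⟨h1, ?_⟩ (hout y h3 he)
    rintro rfl
    exact h3 he
  · obtain ⟨u, y, z, h1, h2, h3, h4, h5, h6, h7⟩ := h
    obtain ⟨rfl, rfl⟩ := Prod.mk.inj h7
    refine .tail (hin _ u h5 h6 (H2 h5)) ⟨h1, ?_⟩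
    rintro rfl
    rcases H2 h5 with h | h
    · exact h h6
    · exact h (T_dom h2)
  · obtain ⟨u, y, z, h1, h2, h3, h4, h5, h6, h7⟩ := h
    obtain ⟨rfl, rfl⟩ := Prod.mk.inj h7
    have he := H3 rfl
    refine (hin _ u h5 h6 (H2 h5)).trans (.head ⟨h1, ?_⟩ (hout y h4 he))
    rintro rfl
    exact h4 he

theorem lift_path (hsc : StronglyConnected E) {dr : V → V}
    (hdr : ∀ r, Marked E s r → ImmDomIs E s r (dr r)) {r : V} (hr : IsRoot E s r)
    {e : V × V} (S : V → V → Prop)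
    (hS : ∀ a b, S a b → (a, b) ∈ auxEdges E s r (dr r) ∧ (a, b) ≠ e ∧
      (MarkedChildOfBoundary E s r a → ¬ Dominates E s a e.1 ∨ ¬ Dominates E s r e.2) ∧
      (b = dr r → Dominates E s r e.2)) {v w : V} (h : ReflTransGen S v w) :
    Reaches (E \ {e}) v w := by
  rw [reaches_iff]
  induction h with
  | refl => exact .refl
  | tail _ h ih =>
    obtain ⟨h1, h2, h3, h4⟩ := hS _ _ h
    exact ih.trans (lift_edge hsc hdr hr h1 h2 h3 h4)

/-- sources of auxiliary edges -/
theorem aux_src {r d a b : V} (h : (a, b) ∈ auxEdges E s r d) :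
    a ∈ Tset E s r ∨ MarkedChildOfBoundary E s r a ∨ (a = d ∧ b = r ∧ r ≠ s) := by
  rcases h with ((((h | h) | h) | h) | h) | h
  · exact Or.inl h.2.1
  · exact Or.inl h.1
  · obtain ⟨hrs, h⟩ := h
    obtain ⟨rfl, rfl⟩ := Prod.mk.inj h
    exact Or.inr (Or.inr ⟨rfl, rfl, hrs⟩)
  · obtain ⟨u, y, h1, h2, h3, h4⟩ := h
    obtain ⟨rfl, rfl⟩ := Prod.mk.inj h4
    exact Or.inl h2
  · obtain ⟨u, y, z, h1, h2, h3, h4, h5, h6, h7⟩ := h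
    obtain ⟨rfl, rfl⟩ := Prod.mk.inj h7
    exact Or.inr (Or.inl h5)
  · obtain ⟨u, y, z, h1, h2, h3, h4, h5, h6, h7⟩ := h
    obtain ⟨rfl, rfl⟩ := Prod.mk.inj h7
    exact Or.inr (Or.inl h5)

/-- targets of auxiliary edges -/
theorem aux_tgt {r d a b : V} (hr : IsRoot E s r) (h : (a, b) ∈ auxEdges E s r d) :
    b ∈ Tset E s r ∨ (MarkedChildOfBoundary E s r b ∧ ImmDomIs E s b a) ∨ (b = d ∧ r ≠ s) := by
  have hne : ∀ y, ¬ Dominates E s r y → r ≠ s := by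
    rintro y hy rfl
    exact hy (dom_start y)
  rcases h with ((((h | h) | h) | h) | h) | h
  · exact Or.inl h.2.2
  · exact Or.inr (Or.inl ⟨⟨h.2.1, _, h.1, h.2.2⟩, h.2.2⟩)
  · obtain ⟨hrs, h⟩ := h
    obtain ⟨rfl, rfl⟩ := Prod.mk.inj h
    exact Or.inl (root_T (hr.resolve_left hrs))
  · obtain ⟨u, y, h1, h2, h3, h4⟩ := h
    obtain ⟨rfl, rfl⟩ := Prod.mk.inj h4
    exact Or.inr (Or.inr ⟨rfl, hne _ h3⟩)
  · obtain ⟨u, y, z, h1, h2, h3, h4, h5, h6, h7⟩ := h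
    obtain ⟨rfl, rfl⟩ := Prod.mk.inj h7
    exact Or.inl h2
  · obtain ⟨u, y, z, h1, h2, h3, h4, h5, h6, h7⟩ := h
    obtain ⟨rfl, rfl⟩ := Prod.mk.inj h7
    exact Or.inr (Or.inr ⟨rfl, hne _ h4⟩)

theorem backward [Fintype V] (hsc : StronglyConnected E) {dr : V → V}
    (hdr : ∀ r, Marked E s r → ImmDomIs E s r (dr r)) {r : V} (hr : IsRoot E s r)
    {v w : V} (hv : v ∈ Tset E s r) (hw : w ∈ Tset E s r)
    (h : ∀ e ∈ auxEdges E s r (dr r), Reaches (auxEdges E s r (dr r) \ {e}) v w)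
    (e : V × V) (he : e ∈ E) : Reaches (E \ {e}) v w := by
  have hdr' : ∀ r, Marked E s r → ∃ d, ImmDomIs E s r d := fun r h => ⟨_, hdr r h⟩
  have hndr : r ≠ s → ¬ Dominates E s r (dr r) := by
    intro hrs
    have hm := hr.resolve_left hrs
    exact bridge_src hsc (idom_edge hsc hm (hdr r hm))
  -- case 1
  have case1 : e ∈ auxEdges E s r (dr r) →
      (∀ z, MarkedChildOfBoundary E s r z → ¬ Dominates E s z e.1) → Dominates E s r e.2 →
      Reaches (E \ {e}) v w := by
    intro h1 h2 h3
    refine lift_path hsc hdr hr _ ?_ (reaches_iff.1 (h e h1))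
    rintro a b ⟨hab, hne⟩
    exact ⟨hab, hne, fun hz => Or.inl (h2 a hz), fun _ => h3⟩
  -- case 2
  have case2 : r ≠ s → ¬ Dominates E s r e.2 → Reaches (E \ {e}) v w := by
    intro hrs h2
    have hedge : (dr r, r) ∈ auxEdges E s r (dr r) :=
      Or.inl (Or.inl (Or.inl (Or.inr ⟨hrs, rfl⟩)))
    have hpath := rtg_between (reaches_iff.1 (h _ hedge))
    have hnot : ∀ y, ReflTransGen
        (fun a b => (a, b) ∈ auxEdges E s r (dr r) \ {(dr r, r)}) y w → y ≠ dr r := by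
      rintro y hy rfl
      rcases ReflTransGen.cases_head hy with h | ⟨c, h, _⟩
      · exact hndr hrs (h ▸ T_dom hw)
      · rcases aux_src h.1 with h' | h' | ⟨_, h', _⟩
        · exact hndr hrs (T_dom h')
        · exact hndr hrs (mcb_dom h')
        · exact h.2 (by rw [h']; rfl)
    refine lift_path hsc hdr hr _ ?_ hpath
    rintro a b ⟨hab, _, hb⟩
    have hbn := hnot b hb
    refine ⟨hab.1, ?_, fun _ => Or.inr h2, fun h => absurd h hbn⟩
    rintro rfl
    rcases aux_tgt hr hab.1 with h' | ⟨h', _⟩ | ⟨h', _⟩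
    · exact h2 (T_dom h')
    · exact h2 (mcb_dom h')
    · exact hbn h'
  -- case 3
  have case3 : ∀ z, MarkedChildOfBoundary E s r z → Dominates E s z e.1 → Dominates E s r e.2 →
      Reaches (E \ {e}) v w := by
    intro z hz h1 h2
    obtain ⟨d, hd, hzd⟩ := id hz.2
    have hedge : (d, z) ∈ auxEdges E s r (dr r) :=
      Or.inl (Or.inl (Or.inl (Or.inl (Or.inr ⟨hd, hz.1, hzd⟩))))
    have hpath := rtg_between (reaches_iff.1 (h _ hedge))
    have hnot : ∀ y, ReflTransGen
        (fun a b => (a, b) ∈ auxEdges E s r (dr r) \ {(d, z)}) v y → y ≠ z := by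
      rintro y hy rfl
      rcases ReflTransGen.cases_tail hy with h | ⟨c, _, h⟩
      · subst h
        exact mcb_not_T hsc hz hv (dom_refl _)
      · rcases aux_tgt hr h.1 with h' | ⟨_, h'⟩ | ⟨h', hrs⟩
        · exact mcb_not_T hsc hz h' (dom_refl _)
        · have e1 := bridge_idom hsc (idom_edge hsc hz.1 hzd) h'
          subst e1
          exact h.2 rfl
        · exact hndr hrs (h' ▸ mcb_dom hz)
    refine lift_path hsc hdr hr _ ?_ hpath
    rintro a b ⟨hab, ha, _⟩
    have han := hnot a ha
    refine ⟨hab.1, ?_, fun hz' => Or.inl ?_, fun _ => h2⟩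
    · rintro rfl
      rcases aux_src hab.1 with h' | h' | ⟨h', _, hrs⟩
      · exact mcb_not_T hsc hz h' h1
      · exact han (mcb_disj hsc h' hz (dom_refl _) h1)
      · apply hndr hrs
        rw [← h']
        exact dom_trans (mcb_dom hz) h1
    · intro hc
      exact han (mcb_disj hsc hz' hz hc h1)
  have hne : ∀ y, ¬ Dominates E s r y → r ≠ s := by
    rintro y hy rfl
    exact hy (dom_start y)
  obtain ⟨p, q⟩ := e
  by_cases hq : Dominates E s r q
  swap
  · exact case2 (hne _ hq) hq
  rcases trichotomy hsc hdr' hr p with hp | hp | ⟨z, hz, hp⟩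
  · have hrs := hne _ hp
    have hm := hr.resolve_left hrs
    obtain ⟨rfl, rfl⟩ := bridge_enter (idom_edge hsc hm (hdr r hm)) he hp hq
    refine case1 (Or.inl (Or.inl (Or.inl (Or.inr ⟨hrs, rfl⟩)))) ?_ hq
    intro z hz hc
    exact hp (dom_trans (mcb_dom hz) hc)
  · refine case1 ?_ (fun z hz => mcb_not_T hsc hz hp) hq
    by_cases hqT : q ∈ Tset E s r
    · exact Or.inl (Or.inl (Or.inl (Or.inl (Or.inl ⟨he, hp, hqT⟩))))
    · exact Or.inl (Or.inl (Or.inl (Or.inl (Or.inr ⟨hp, T_exit hsc hdr' hr hp he hq hqT⟩))))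
  · exact case3 z hz hp hq

theorem dom_of_two {v w y : V} (h : ∀ e ∈ E, Reaches (E \ {e}) w v) (hy : Marked E s y)
    (hv : Dominates E s y v) : Dominates E s y w := by
  by_contra hc
  obtain ⟨b, hb⟩ := hy
  exact noenter hb hc (reaches_iff.1 (h _ hb.1)) hv

end main

/-- Two distinct vertices `v` and `w` are 2-edge-connected in `G` if and only if
there is a root `r` such that `v` and `w` are both ordinary vertices of the
auxiliary graph `G_r` (i.e. `v, w ∈ T(r)`) and they are 2-edge-connected in `G_r`. -/
theorem two_edge_connected_iff_in_aux_graph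
    {V : Type*} [Fintype V] (E : Set (V × V)) (s : V)
    (hsc : StronglyConnected E) (dr : V → V)
    (hdr : ∀ r, Marked E s r → ImmDomIs E s r (dr r))
    (v w : V) (hvw : v ≠ w) :
    TwoEdgeConn E v w ↔
      ∃ r, IsRoot E s r ∧ v ∈ Tset E s r ∧ w ∈ Tset E s r ∧
        TwoEdgeConn (auxEdges E s r (dr r)) v w := by
  constructor
  · intro h
    have h := h.resolve_left hvw
    obtain ⟨r, hr, hv⟩ := deepest_exists (s := s) hsc v
    have hiff : ∀ y, Marked E s y → (Dominates E s y v ↔ Dominates E s y w) := fun y hy =>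
      ⟨dom_of_two (fun e he => (h e he).2) hy, dom_of_two (fun e he => (h e he).1) hy⟩
    have hw : w ∈ Tset E s r := by
      rcases hv with ⟨h1, h2, h3⟩ | ⟨h1, h2⟩
      · exact Or.inl ⟨h1, (hiff r h1).1 h2, fun x hx hxw => h3 x hx ((hiff x hx).2 hxw)⟩
      · exact Or.inr ⟨h1, fun x hx hxw => h2 x hx ((hiff x hx).2 hxw)⟩
    refine ⟨r, hr, hv, hw, Or.inr fun e he => ⟨?_, ?_⟩⟩
    · exact forward hsc hdr hr hv hw (fun e he => (h e he).1) e he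
    · exact forward hsc hdr hr hw hv (fun e he => (h e he).2) e he
  · rintro ⟨r, hr, hv, hw, h⟩
    have h := h.resolve_left hvw
    refine Or.inr fun e he => ⟨?_, ?_⟩
    · exact backward hsc hdr hr hv hw (fun e he => (h e he).1) e he
    · exact backward hsc hdr hr hw hv (fun e he => (h e he).2) e he
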